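/- arXiv:1506.06377 — 2 statements merged into one kernel-verified Lean document; each statement's English description precedes it below -/
import Mathlib

section
/- For positive trace-class operators ρ, σ on H_ABC with Tr ρ ≤ 1 and Tr σ ≤ 1 (finite-dimensional case), and λ ∈ [0,1], the conditional mutual information satisfies λ I(A:C|B)_ρ + (1−λ) I(A:C|B)_σ ≤ I(A:C|B)_{λρ+(1−λ)σ} + 2h₂(λ). -/
open Matrix
open scoped ComplexOrder

noncomputable section

/-- The von Neumann entropy, extended to the cone of positive trace-class operators by
`H(ρ) = Tr η(ρ) − η(Tr ρ)` with `η(x) = −x log x` (computed spectrally). -/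
def vnEnt {n : Type*} [Fintype n] [DecidableEq n] (ρ : Matrix n n ℂ) : ℝ :=
  if h : ρ.IsHermitian then
    (∑ i, Real.negMulLog (h.eigenvalues i)) - Real.negMulLog (∑ i, h.eigenvalues i)
  else 0

/-- A state (density operator): positive semidefinite with unit trace. -/
def IsState {n : Type*} [Fintype n] (ρ : Matrix n n ℂ) : Prop :=
  ρ.PosSemidef ∧ ρ.trace = 1

section Tripartite

variable {a b c : Type*} [Fintype a] [DecidableEq a] [Fintype b] [DecidableEq b]
  [Fintype c] [DecidableEq c]

/-- Marginal `ω_A` of a tripartite operator. -/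
def mA (ω : Matrix (a × b × c) (a × b × c) ℂ) : Matrix a a ℂ :=
  Matrix.of fun i j => ∑ k : b × c, ω (i, k) (j, k)

/-- Marginal `ω_B`. -/
def mB (ω : Matrix (a × b × c) (a × b × c) ℂ) : Matrix b b ℂ :=
  Matrix.of fun i j => ∑ k : a, ∑ l : c, ω (k, i, l) (k, j, l)

/-- Marginal `ω_C`. -/
def mC (ω : Matrix (a × b × c) (a × b × c) ℂ) : Matrix c c ℂ :=
  Matrix.of fun i j => ∑ k : a, ∑ l : b, ω (k, l, i) (k, l, j)

/-- Marginal `ω_AB`. -/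
def mAB (ω : Matrix (a × b × c) (a × b × c) ℂ) : Matrix (a × b) (a × b) ℂ :=
  Matrix.of fun p q => ∑ k : c, ω (p.1, p.2, k) (q.1, q.2, k)

/-- Marginal `ω_BC`. -/
def mBC (ω : Matrix (a × b × c) (a × b × c) ℂ) : Matrix (b × c) (b × c) ℂ :=
  Matrix.of fun p q => ∑ k : a, ω (k, p) (k, q)

/-- Marginal `ω_AC`. -/
def mAC (ω : Matrix (a × b × c) (a × b × c) ℂ) : Matrix (a × c) (a × c) ℂ :=
  Matrix.of fun p q => ∑ k : b, ω (p.1, k, p.2) (q.1, k, q.2)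

/-- Conditional mutual information `I(A:C|B)_ω = H(ω_AB)+H(ω_BC)−H(ω_ABC)−H(ω_B)`. -/
def cmi (ω : Matrix (a × b × c) (a × b × c) ℂ) : ℝ :=
  vnEnt (mAB ω) + vnEnt (mBC ω) - vnEnt ω - vnEnt (mB ω)

end Tripartite

section EntropyScalars

open Real

/-- The log-sum inequality. -/
theorem sum_negMulLog_add_mul_log_le {ι : Type*} (s : Finset ι) (a x : ι → ℝ)
    (ha : ∀ i ∈ s, 0 ≤ a i) (hax : ∀ i ∈ s, a i ≤ x i) :
    ∑ i ∈ s, (negMulLog (a i) + a i * log (x i)) ≤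
      negMulLog (∑ i ∈ s, a i) + (∑ i ∈ s, a i) * log (∑ i ∈ s, x i) := by
  set T := ∑ i ∈ s, a i with hT
  set S := ∑ i ∈ s, x i with hS
  have hTS : T ≤ S := Finset.sum_le_sum hax
  rcases (Finset.sum_nonneg ha).eq_or_lt with h | hTpos
  · have hz : ∀ i ∈ s, a i = 0 := (Finset.sum_eq_zero_iff_of_nonneg ha).1 h.symm
    rw [Finset.sum_eq_zero fun i hi => by simp [hz i hi], hT, ← h]
    simp
  have hSpos : 0 < S := hTpos.trans_le hTS
  have key : ∀ i ∈ s, negMulLog (a i) + a i * log (x i) ≤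
      a i * (log S - log T) + (x i * (T / S) - a i) := by
    intro i hi
    rcases (ha i hi).eq_or_lt with h | hpos
    · have hx : 0 ≤ x i := (ha i hi).trans (hax i hi)
      rw [← h]
      simpa using mul_nonneg hx (div_pos hTpos hSpos).le
    · have hx : 0 < x i := hpos.trans_le (hax i hi)
      have hlog := log_le_sub_one_of_pos (div_pos (mul_pos hx hTpos) (mul_pos hpos hSpos))
      rw [log_div (mul_pos hx hTpos).ne' (mul_pos hpos hSpos).ne', log_mul hx.ne' hTpos.ne',
        log_mul hpos.ne' hSpos.ne'] at hlog
      have h2 := mul_le_mul_of_nonneg_left hlog hpos.le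
      have h3 : a i * (x i * T / (a i * S) - 1) = x i * (T / S) - a i := by
        field_simp
      rw [h3] at h2
      simp only [negMulLog]
      linarith
  refine (Finset.sum_le_sum key).trans (le_of_eq ?_)
  rw [Finset.sum_add_distrib, Finset.sum_sub_distrib, ← Finset.sum_mul, ← Finset.sum_mul,
    ← hT, ← hS]
  simp only [negMulLog]
  field_simp
  ring

/-- The unnormalised binary entropy `η(p) + η(q) − η(p + q)`. -/
def mixEntropy (p q : ℝ) : ℝ := negMulLog p + negMulLog q - negMulLog (p + q)

theorem mixEntropy_eq (p q : ℝ) :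
    mixEntropy p q = (negMulLog p + p * log (p + q)) + (negMulLog q + q * log (p + q)) := by
  simp only [mixEntropy, negMulLog]
  ring

theorem sum_mixEntropy_le {ι : Type*} (s : Finset ι) (p q : ι → ℝ)
    (hp : ∀ i ∈ s, 0 ≤ p i) (hq : ∀ i ∈ s, 0 ≤ q i) :
    ∑ i ∈ s, mixEntropy (p i) (q i) ≤ mixEntropy (∑ i ∈ s, p i) (∑ i ∈ s, q i) := by
  simp only [mixEntropy_eq]
  rw [Finset.sum_add_distrib, ← Finset.sum_add_distrib (f := p) (g := q)]
  exact add_le_add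
    (sum_negMulLog_add_mul_log_le s p _ hp fun i hi => le_add_of_nonneg_right (hq i hi))
    (sum_negMulLog_add_mul_log_le s q _ hq fun i hi => le_add_of_nonneg_left (hp i hi))

theorem negMulLog_add_mul_log_nonneg {p x : ℝ} (hp : 0 ≤ p) (hpx : p ≤ x) :
    0 ≤ negMulLog p + p * log x := by
  rcases hp.eq_or_lt with rfl | h
  · simp
  · have := mul_le_mul_of_nonneg_left (log_le_log h hpx) hp
    simp only [negMulLog]
    linarith

theorem mixEntropy_nonneg {p q : ℝ} (hp : 0 ≤ p) (hq : 0 ≤ q) : 0 ≤ mixEntropy p q := by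
  rw [mixEntropy_eq]
  exact add_nonneg (negMulLog_add_mul_log_nonneg hp (by linarith))
    (negMulLog_add_mul_log_nonneg hq (by linarith))

theorem mixEntropy_mono {p q p' q' : ℝ} (hp : 0 ≤ p) (hq : 0 ≤ q) (hpp : p ≤ p') (hqq : q ≤ q') :
    mixEntropy p q ≤ mixEntropy p' q' := by
  have h := sum_mixEntropy_le Finset.univ ![p, p' - p] ![q, q' - q]
    (by simp [Fin.forall_fin_two, hp, hpp]) (by simp [Fin.forall_fin_two, hq, hqq])
  have h2 := mixEntropy_nonneg (sub_nonneg.2 hpp) (sub_nonneg.2 hqq)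
  simp only [Fin.sum_univ_two, Matrix.cons_val_zero, Matrix.cons_val_one, add_sub_cancel] at h
  linarith

theorem mixEntropy_one_sub (l : ℝ) : mixEntropy l (1 - l) = binEntropy l := by
  simp [mixEntropy, binEntropy_eq_negMulLog_add_negMulLog_one_sub]

end EntropyScalars

theorem re_diag_nonneg {n : Type*} {A : Matrix n n ℂ} (hA : A.PosSemidef) (i : n) :
    0 ≤ (A i i).re :=
  (Complex.le_def.1 (hA.diag_nonneg (i := i))).1

theorem re_trace_nonneg {n : Type*} [Fintype n] {A : Matrix n n ℂ} (hA : A.PosSemidef) :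
    0 ≤ A.trace.re :=
  (Complex.le_def.1 hA.trace_nonneg).1

section TraceEta

open Real

variable {m n : Type*} [Fintype m] [DecidableEq m] [Fintype n] [DecidableEq n]

/-- `Tr η(A)`, as a sum over the roots of the characteristic polynomial. -/
def trEta (A : Matrix n n ℂ) : ℝ := (A.charpoly.roots.map fun z => negMulLog z.re).sum

theorem trEta_eq_sum_eigenvalues {A : Matrix n n ℂ} (hA : A.IsHermitian) :
    trEta A = ∑ i, negMulLog (hA.eigenvalues i) := by
  simp [trEta, hA.roots_charpoly_eq_eigenvalues]

theorem vnEnt_eq {A : Matrix n n ℂ} (hA : A.IsHermitian) :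
    vnEnt A = trEta A - negMulLog A.trace.re := by
  simp [vnEnt, hA, trEta_eq_sum_eigenvalues hA, hA.trace_eq_sum_eigenvalues]

theorem trEta_mul_comm (A : Matrix m n ℂ) (B : Matrix n m ℂ) :
    trEta (A * B) = trEta (B * A) := by
  have h := congrArg (fun p => (p.roots.map fun z => negMulLog z.re).sum)
    (charpoly_mul_comm' A B)
  have hne (k : ℕ) {p : Polynomial ℂ} (hp : p.Monic) : (Polynomial.X ^ k * p) ≠ 0 :=
    ((Polynomial.monic_X_pow k).mul hp).ne_zero
  simpa [Polynomial.roots_mul (hne _ (charpoly_monic _)), trEta, Multiset.map_nsmul,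
    Multiset.sum_nsmul] using h

theorem trEta_diagonal (d : n → ℂ) : trEta (diagonal d) = ∑ i, negMulLog (d i).re := by
  rw [trEta, charpoly_diagonal, Polynomial.roots_prod _ _
    (Polynomial.monic_prod_X_sub_C d Finset.univ).ne_zero]
  simp

theorem exists_unitary_diagonalization {A : Matrix n n ℂ} (hA : A.IsHermitian) :
    ∃ U : Matrix n n ℂ, Uᴴ * U = 1 ∧ U * Uᴴ = 1 ∧
      A = U * diagonal (fun i => (hA.eigenvalues i : ℂ)) * Uᴴ :=
  ⟨hA.eigenvectorUnitary, Unitary.coe_star_mul_self _, Unitary.coe_mul_star_self _,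
    hA.spectral_theorem⟩

theorem trEta_conj (U A : Matrix n n ℂ) (hU : U * Uᴴ = 1) : trEta (Uᴴ * A * U) = trEta A := by
  rw [trEta_mul_comm, ← Matrix.mul_assoc, hU, Matrix.one_mul]

theorem trEta_smul {A : Matrix n n ℂ} (hA : A.IsHermitian) (l : ℝ) :
    trEta (l • A) = l * trEta A + negMulLog l * A.trace.re := by
  obtain ⟨U, hU, -, hAU⟩ := exists_unitary_diagonalization hA
  have h : l • A = U * (diagonal (fun i => ((l * hA.eigenvalues i : ℝ) : ℂ)) * Uᴴ) := by
    conv_lhs => rw [hAU]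
    rw [Matrix.mul_assoc, ← Matrix.mul_smul, ← Matrix.smul_mul, ← diagonal_smul]
    congr 3
    ext i
    simp
  rw [h, trEta_mul_comm, Matrix.mul_assoc, hU, Matrix.mul_one, trEta_diagonal,
    trEta_eq_sum_eigenvalues hA, hA.trace_eq_sum_eigenvalues]
  simp [negMulLog_mul, Finset.sum_add_distrib, Finset.mul_sum, add_comm, mul_comm]

/-- Peierls' inequality for `η`. -/
theorem trEta_le_sum_diag {A : Matrix n n ℂ} (hA : A.PosSemidef) :
    trEta A ≤ ∑ i, negMulLog (A i i).re := by
  obtain ⟨U, hU, hU', hAU⟩ := exists_unitary_diagonalization hA.isHermitian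
  set μ := hA.isHermitian.eigenvalues
  have hdiag (i : n) : (A i i).re = ∑ j, Complex.normSq (U i j) * μ j := by
    conv_lhs => rw [hAU]
    rw [Matrix.mul_apply, Complex.re_sum]
    refine Finset.sum_congr rfl fun j _ => ?_
    simp only [mul_diagonal, conjTranspose_apply, RCLike.star_def]
    rw [mul_right_comm, Complex.mul_conj, ← Complex.ofReal_mul, Complex.ofReal_re]
  have hrow (i : n) : ∑ j, Complex.normSq (U i j) = 1 := by
    have := congrFun (congrFun hU' i) i
    rw [Matrix.mul_apply, one_apply_eq] at this
    simp only [conjTranspose_apply, RCLike.star_def, Complex.mul_conj] at this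
    exact_mod_cast this
  have hcol (j : n) : ∑ i, Complex.normSq (U i j) = 1 := by
    have := congrFun (congrFun hU j) j
    rw [Matrix.mul_apply, one_apply_eq] at this
    simp only [conjTranspose_apply, RCLike.star_def, mul_comm, Complex.mul_conj] at this
    exact_mod_cast this
  calc trEta A = ∑ j, negMulLog (μ j) := trEta_eq_sum_eigenvalues _
    _ = ∑ j, ∑ i, Complex.normSq (U i j) * negMulLog (μ j) := by
      simp [← Finset.sum_mul, hcol]
    _ = ∑ i, ∑ j, Complex.normSq (U i j) * negMulLog (μ j) := Finset.sum_comm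
    _ ≤ ∑ i, negMulLog (A i i).re := by
      refine Finset.sum_le_sum fun i _ => ?_
      rw [hdiag]
      simpa using concaveOn_negMulLog.le_map_sum (t := Finset.univ)
        (w := fun j => Complex.normSq (U i j)) (p := μ)
        (fun j _ => Complex.normSq_nonneg _) (hrow i) fun j _ => hA.eigenvalues_nonneg j

/-- Superadditivity of `H` on the positive cone. -/
theorem vnEnt_add_le {P Q : Matrix n n ℂ} (hP : P.PosSemidef) (hQ : Q.PosSemidef) :
    vnEnt P + vnEnt Q ≤ vnEnt (P + Q) := by
  have hR := hP.add hQ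
  obtain ⟨U, hU, hU', hRU⟩ := exists_unitary_diagonalization hR.isHermitian
  have hP' := hP.conjTranspose_mul_mul_same U
  have hQ' := hQ.conjTranspose_mul_mul_same U
  have hPle := trEta_le_sum_diag hP'
  have hQle := trEta_le_sum_diag hQ'
  rw [trEta_conj U _ hU'] at hPle hQle
  have hsum (i : n) : ((Uᴴ * P * U) i i).re + ((Uᴴ * Q * U) i i).re =
      hR.isHermitian.eigenvalues i := by
    have h : Uᴴ * (P + Q) * U = diagonal fun i => (hR.isHermitian.eigenvalues i : ℂ) := by
      calc Uᴴ * (P + Q) * U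
          = Uᴴ * (U * diagonal (fun i => (hR.isHermitian.eigenvalues i : ℂ)) * Uᴴ) * U :=
            congrArg (fun M => Uᴴ * M * U) hRU
        _ = Uᴴ * U * diagonal (fun i => (hR.isHermitian.eigenvalues i : ℂ)) * (Uᴴ * U) := by
            simp only [Matrix.mul_assoc]
        _ = _ := by rw [hU, Matrix.one_mul, Matrix.mul_one]
    rw [← Complex.add_re, ← Matrix.add_apply, ← Matrix.add_mul, ← Matrix.mul_add, h]
    simp
  have htr (A : Matrix n n ℂ) : ∑ i, ((Uᴴ * A * U) i i).re = A.trace.re := by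
    rw [← Complex.re_sum]
    change (Uᴴ * A * U).trace.re = _
    rw [trace_mul_comm, ← Matrix.mul_assoc, hU', Matrix.one_mul]
  have h := sum_mixEntropy_le Finset.univ (fun i => ((Uᴴ * P * U) i i).re)
    (fun i => ((Uᴴ * Q * U) i i).re) (fun i _ => re_diag_nonneg hP' i)
    (fun i _ => re_diag_nonneg hQ' i)
  simp only [mixEntropy, Finset.sum_add_distrib, Finset.sum_sub_distrib, htr, hsum,
    ← trEta_eq_sum_eigenvalues hR.isHermitian] at h
  rw [vnEnt_eq hP.isHermitian, vnEnt_eq hQ.isHermitian, vnEnt_eq hR.isHermitian, trace_add,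
    Complex.add_re]
  linarith

theorem exists_mul_conjTranspose_diag {P : Matrix n n ℂ} (hP : P.PosSemidef) :
    ∃ B : Matrix n n ℂ, B * Bᴴ = P ∧
      ∀ i, ((Bᴴ * B) i i).re = hP.isHermitian.eigenvalues i := by
  obtain ⟨U, hU, -, hPU⟩ := exists_unitary_diagonalization hP.isHermitian
  set μ := hP.isHermitian.eigenvalues
  set D : Matrix n n ℂ := diagonal fun i => ((√(μ i) : ℝ) : ℂ) with hD
  have hDh : Dᴴ = D := by
    rw [hD, diagonal_conjTranspose]
    congr 1
    ext i
    simp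
  have hDD : D * D = diagonal fun i => (μ i : ℂ) := by
    rw [hD, diagonal_mul_diagonal]
    congr 1
    ext i
    rw [← Complex.ofReal_mul, mul_self_sqrt (hP.eigenvalues_nonneg i)]
  refine ⟨U * D, ?_, fun i => ?_⟩
  · rw [conjTranspose_mul, hDh, Matrix.mul_assoc, ← Matrix.mul_assoc D, hDD, ← Matrix.mul_assoc,
      ← hPU]
  · rw [conjTranspose_mul, hDh, Matrix.mul_assoc, ← Matrix.mul_assoc Uᴴ, hU, Matrix.one_mul, hDD]
    simp

theorem trEta_add_le {P Q : Matrix n n ℂ} (hP : P.PosSemidef) (hQ : Q.PosSemidef) :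
    trEta (P + Q) ≤ trEta P + trEta Q := by
  obtain ⟨B, hB, hBd⟩ := exists_mul_conjTranspose_diag hP
  obtain ⟨C, hC, hCd⟩ := exists_mul_conjTranspose_diag hQ
  have h := trEta_le_sum_diag (posSemidef_conjTranspose_mul_self (fromCols B C))
  rw [← trEta_mul_comm, conjTranspose_fromCols_eq_fromRows_conjTranspose,
    fromCols_mul_fromRows, fromRows_mul_fromCols, hB, hC, Fintype.sum_sum_type] at h
  simpa [hBd, hCd, ← trEta_eq_sum_eigenvalues] using h

theorem vnEnt_smul {A : Matrix n n ℂ} (hA : A.IsHermitian) (l : ℝ) :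
    vnEnt (l • A) = l * vnEnt A := by
  have hlA : (l • A).IsHermitian := hA.smul (IsSelfAdjoint.all l)
  rw [vnEnt_eq hA, vnEnt_eq hlA, trEta_smul hA, trace_smul, Complex.smul_re, smul_eq_mul,
    negMulLog_mul]
  ring

theorem vnEnt_concave {P Q : Matrix n n ℂ} (hP : P.PosSemidef) (hQ : Q.PosSemidef) {l : ℝ}
    (h0 : 0 ≤ l) (h1 : l ≤ 1) :
    l * vnEnt P + (1 - l) * vnEnt Q ≤ vnEnt (l • P + (1 - l) • Q) := by
  rw [← vnEnt_smul hP.isHermitian, ← vnEnt_smul hQ.isHermitian]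
  exact vnEnt_add_le (hP.smul h0) (hQ.smul (sub_nonneg.2 h1))

theorem vnEnt_convexCombination_le {P Q : Matrix n n ℂ} (hP : P.PosSemidef) (hQ : Q.PosSemidef)
    (hP1 : P.trace.re ≤ 1) (hQ1 : Q.trace.re ≤ 1) {l : ℝ} (h0 : 0 ≤ l) (h1 : l ≤ 1) :
    vnEnt (l • P + (1 - l) • Q) ≤ l * vnEnt P + (1 - l) * vnEnt Q + binEntropy l := by
  have h1' := sub_nonneg.2 h1
  have hlP := hP.smul h0
  have hlQ := hQ.smul h1'
  have hsub := trEta_add_le hlP hlQ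
  have hmix := mixEntropy_mono (mul_nonneg h0 (re_trace_nonneg hP))
    (mul_nonneg h1' (re_trace_nonneg hQ)) (mul_le_of_le_one_right h0 hP1)
    (mul_le_of_le_one_right h1' hQ1)
  rw [mixEntropy_one_sub, mixEntropy] at hmix
  rw [← vnEnt_smul hP.isHermitian, ← vnEnt_smul hQ.isHermitian, vnEnt_eq hlP.isHermitian,
    vnEnt_eq hlQ.isHermitian, vnEnt_eq (hlP.add hlQ).isHermitian, trace_add, trace_smul,
    trace_smul, Complex.add_re, Complex.smul_re, Complex.smul_re, smul_eq_mul, smul_eq_mul]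
  linarith

end TraceEta

section Marginals

variable {a b c : Type*}

theorem mAB_posSemidef [Fintype c] {ω : Matrix (a × b × c) (a × b × c) ℂ} (hω : ω.PosSemidef) :
    (mAB ω).PosSemidef := by
  have h : mAB ω = ∑ k : c, ω.submatrix (fun p : a × b => (p.1, p.2, k)) fun p => (p.1, p.2, k) := by
    ext p q
    simp [mAB, Matrix.sum_apply]
  rw [h]
  exact posSemidef_sum _ fun k _ => hω.submatrix _

theorem mBC_posSemidef [Fintype a] {ω : Matrix (a × b × c) (a × b × c) ℂ} (hω : ω.PosSemidef) :
    (mBC ω).PosSemidef := by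
  have h : mBC ω = ∑ k : a, ω.submatrix (fun p : b × c => (k, p)) fun p => (k, p) := by
    ext p q
    simp [mBC, Matrix.sum_apply]
  rw [h]
  exact posSemidef_sum _ fun k _ => hω.submatrix _

theorem mB_posSemidef [Fintype a] [Fintype c]
    {ω : Matrix (a × b × c) (a × b × c) ℂ} (hω : ω.PosSemidef) : (mB ω).PosSemidef := by
  have h : mB ω = ∑ k : a, ∑ l : c, ω.submatrix (fun i : b => (k, i, l)) fun i => (k, i, l) := by
    ext p q
    simp [mB, Matrix.sum_apply]
  rw [h]
  exact posSemidef_sum _ fun k _ => posSemidef_sum _ fun l _ => hω.submatrix _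

theorem trace_mB [Fintype a] [Fintype b] [Fintype c]
    (ω : Matrix (a × b × c) (a × b × c) ℂ) : (mB ω).trace = ω.trace := by
  simp only [trace, diag_apply, mB, of_apply, Fintype.sum_prod_type]
  exact Finset.sum_comm

theorem mAB_combination [Fintype c] (s t : ℝ) (ρ σ : Matrix (a × b × c) (a × b × c) ℂ) :
    mAB (s • ρ + t • σ) = s • mAB ρ + t • mAB σ := by
  ext p q
  simp [mAB, Finset.sum_add_distrib, Finset.mul_sum]

theorem mBC_combination [Fintype a] (s t : ℝ) (ρ σ : Matrix (a × b × c) (a × b × c) ℂ) :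
    mBC (s • ρ + t • σ) = s • mBC ρ + t • mBC σ := by
  ext p q
  simp [mBC, Finset.sum_add_distrib, Finset.mul_sum]

theorem mB_combination [Fintype a] [Fintype c] (s t : ℝ) (ρ σ : Matrix (a × b × c) (a × b × c) ℂ) :
    mB (s • ρ + t • σ) = s • mB ρ + t • mB σ := by
  ext p q
  simp [mB, Finset.sum_add_distrib, Finset.mul_sum]

end Marginals

/-- Almost-convexity inequality for the conditional mutual information on the positive cone:
`λ I(A:C|B)_ρ + (1−λ) I(A:C|B)_σ ≤ I(A:C|B)_{λρ+(1−λ)σ} + 2h₂(λ)`. -/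
theorem cmi_convex_combination {a b c : Type*} [Fintype a] [DecidableEq a] [Fintype b]
    [DecidableEq b] [Fintype c] [DecidableEq c]
    (ρ σ : Matrix (a × b × c) (a × b × c) ℂ) (hρ : ρ.PosSemidef) (hσ : σ.PosSemidef)
    (hρ1 : ρ.trace.re ≤ 1) (hσ1 : σ.trace.re ≤ 1)
    (l : ℝ) (h0 : 0 ≤ l) (h1 : l ≤ 1) :
    l * cmi ρ + (1 - l) * cmi σ ≤ cmi (l • ρ + (1 - l) • σ) + 2 * Real.binEntropy l := by
  have hAB := vnEnt_concave (mAB_posSemidef hρ) (mAB_posSemidef hσ) h0 h1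
  have hBC := vnEnt_concave (mBC_posSemidef hρ) (mBC_posSemidef hσ) h0 h1
  have hABC := vnEnt_convexCombination_le hρ hσ hρ1 hσ1 h0 h1
  have hB := vnEnt_convexCombination_le (mB_posSemidef hρ) (mB_posSemidef hσ)
    ((trace_mB ρ).symm ▸ hρ1) ((trace_mB σ).symm ▸ hσ1) h0 h1
  simp only [cmi, mAB_combination, mBC_combination, mB_combination]
  linarith
end
end

section
/- For any state ω of a finite-dimensional n-partite system A₁...Aₙ with at least one marginal entropy H(ω_{A_i}) finite, the quantum interaction information Iₙ(ω) = Σ_i H(ω_{A_i}) − Σ_{i<j} H(ω_{A_iA_j}) + Σ_{i<j<k} H(ω_{A_iA_jA_k}) − ... − (−1)ⁿH(ω_{A₁...Aₙ}) satisfies |Iₙ(ω)| ≤ 2^{n−1} min{H(ω_{A₁}), ..., H(ω_{Aₙ})}. -/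
open Matrix
open scoped ComplexOrder

noncomputable section

section Multipartite

variable {N : ℕ} {α : Fin N → Type*}
  [∀ i, Fintype (α i)] [∀ i, DecidableEq (α i)]

/-- The marginal of an operator on `A₁ ⊗ ... ⊗ A_N` on the subsystems in `S`
(all subsystems outside `S` are traced out). -/
def marg (S : Finset (Fin N)) (ω : Matrix (∀ i, α i) (∀ i, α i) ℂ) :
    Matrix (∀ i : {x : Fin N // x ∈ S}, α i.1) (∀ i : {x : Fin N // x ∈ S}, α i.1) ℂ :=
  Matrix.of fun p q =>
    ∑ g : ∀ i : {x : Fin N // x ∉ S}, α i.1,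
      ω (fun i => if h : i ∈ S then p ⟨i, h⟩ else g ⟨i, h⟩)
        (fun i => if h : i ∈ S then q ⟨i, h⟩ else g ⟨i, h⟩)

end Multipartite

/-- The trace norm of a matrix: the sum of its singular values. -/
def traceNorm {n : Type*} [Fintype n] [DecidableEq n] (M : Matrix n n ℂ) : ℝ :=
  ∑ i, Real.sqrt ((Matrix.posSemidef_conjTranspose_mul_self M).1.eigenvalues i)

/-- The quantum interaction information
`I_N(ω) = Σ_i H(ω_{A_i}) − Σ_{i<j} H(ω_{A_iA_j}) + ... − (−1)^N H(ω_{A₁...A_N})`,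
i.e. `−Σ_{∅≠S} (−1)^{|S|} H(ω_S)`. -/
def interInfo {N : ℕ} {α : Fin N → Type*} [∀ i, Fintype (α i)] [∀ i, DecidableEq (α i)]
    (ω : Matrix (∀ i, α i) (∀ i, α i) ℂ) : ℝ :=
  -∑ S ∈ Finset.univ.powerset.filter (fun S : Finset (Fin N) => S.Nonempty),
      (-1 : ℝ) ^ S.card * vnEnt (marg S ω)

open scoped Kronecker

section Spectral

variable {m n : Type*} [Fintype m] [DecidableEq m] [Fintype n] [DecidableEq n]

theorem sum_eigenvalues_eq_sum_roots {A : Matrix n n ℂ} (hA : A.IsHermitian) (f : ℝ → ℝ) :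
    ∑ i, f (hA.eigenvalues i) = (A.charpoly.roots.map fun z => f z.re).sum := by
  rw [hA.roots_charpoly_eq_eigenvalues, Multiset.map_map]
  simp [Function.comp_def]

theorem vnEnt_eq_of_charpoly {A : Matrix m m ℂ} {B : Matrix n n ℂ} (hA : A.IsHermitian)
    (hB : B.IsHermitian) (a b : ℕ)
    (h : Polynomial.X ^ a * A.charpoly = Polynomial.X ^ b * B.charpoly) :
    vnEnt A = vnEnt B := by
  have key : ∀ f : ℝ → ℝ, f 0 = 0 →
      ∑ i, f (hA.eigenvalues i) = ∑ i, f (hB.eigenvalues i) := by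
    intro f hf
    have roots_sum : ∀ (k : ℕ) {p : Polynomial ℂ}, p.Monic →
        ((Polynomial.X ^ k * p).roots.map fun z : ℂ => f z.re).sum =
          (p.roots.map fun z => f z.re).sum := by
      intro k p hp
      rw [Polynomial.roots_mul (mul_ne_zero (pow_ne_zero _ Polynomial.X_ne_zero) hp.ne_zero)]
      simp [Multiset.map_nsmul, Multiset.sum_nsmul, hf]
    rw [sum_eigenvalues_eq_sum_roots, sum_eigenvalues_eq_sum_roots,
      ← roots_sum a A.charpoly_monic, h, roots_sum b B.charpoly_monic]
  rw [vnEnt, vnEnt, dif_pos hA, dif_pos hB, key _ Real.negMulLog_zero, key (fun x => x) rfl]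

theorem vnEnt_transpose {A : Matrix n n ℂ} (hA : A.IsHermitian) : vnEnt Aᵀ = vnEnt A :=
  vnEnt_eq_of_charpoly hA.transpose hA 0 0 (by rw [charpoly_transpose])

theorem vnEnt_submatrix_equiv {A : Matrix n n ℂ} (hA : A.IsHermitian) (e : m ≃ n) :
    vnEnt (A.submatrix e e) = vnEnt A :=
  vnEnt_eq_of_charpoly (hA.submatrix e) hA 0 0 (by
    rw [← charpoly_reindex e.symm A]; rfl)

theorem vnEnt_mul_conjTranspose (M : Matrix m n ℂ) : vnEnt (M * Mᴴ) = vnEnt (Mᴴ * M) :=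
  vnEnt_eq_of_charpoly (isHermitian_mul_conjTranspose_self M)
    (isHermitian_conjTranspose_mul_self M) _ _ (charpoly_mul_comm' M Mᴴ)

theorem vnEnt_conj_unitary {A : Matrix n n ℂ} (hA : A.IsHermitian) (U : unitaryGroup n ℂ) :
    vnEnt ((U : Matrix n n ℂ)ᴴ * A * (U : Matrix n n ℂ)) = vnEnt A :=
  vnEnt_eq_of_charpoly (isHermitian_conjTranspose_mul_mul _ hA) hA 0 0 (by
    have hU : (U : Matrix n n ℂ) * (U : Matrix n n ℂ)ᴴ = 1 := Unitary.coe_mul_star_self U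
    rw [charpoly_mul_comm, ← mul_assoc, hU, one_mul])

theorem vnEnt_of_unique [Unique n] (A : Matrix n n ℂ) : vnEnt A = 0 := by
  unfold vnEnt; split_ifs <;> simp

theorem IsState.vnEnt_eq {A : Matrix n n ℂ} (hA : IsState A) :
    vnEnt A = ∑ i, Real.negMulLog (hA.1.1.eigenvalues i) := by
  have h : (∑ i, hA.1.1.eigenvalues i) = 1 := by
    have := hA.1.1.trace_eq_sum_eigenvalues
    exact Complex.ofReal_injective (by simpa using this.symm.trans hA.2)
  rw [vnEnt, dif_pos hA.1.1, h, Real.negMulLog_one, sub_zero]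

theorem exists_unitary_conj_eq_diagonal {A : Matrix n n ℂ} (hA : A.IsHermitian) :
    ∃ U : unitaryGroup n ℂ,
      (U : Matrix n n ℂ)ᴴ * A * U = diagonal (fun i => (hA.eigenvalues i : ℂ)) := by
  refine ⟨hA.eigenvectorUnitary, ?_⟩
  have := hA.conjStarAlgAut_star_eigenvectorUnitary
  rw [Unitary.conjStarAlgAut_star_apply] at this
  exact this

theorem exists_mul_conjTranspose_eq {A : Matrix n n ℂ} (hA : A.PosSemidef) :
    ∃ M : Matrix n n ℂ, M * Mᴴ = A := by
  obtain ⟨U, hU⟩ := exists_unitary_conj_eq_diagonal hA.1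
  have h1 : (U : Matrix n n ℂ) * (U : Matrix n n ℂ)ᴴ = 1 := Unitary.coe_mul_star_self U
  refine ⟨U * diagonal (fun i => (Real.sqrt (hA.1.eigenvalues i) : ℂ)), ?_⟩
  have h2 : diagonal (fun i => (Real.sqrt (hA.1.eigenvalues i) : ℂ)) *
      (diagonal (fun i => (Real.sqrt (hA.1.eigenvalues i) : ℂ)))ᴴ =
      (U : Matrix n n ℂ)ᴴ * A * U := by
    rw [hU, diagonal_conjTranspose, diagonal_mul_diagonal]
    congr 1; ext i
    simp [← Complex.ofReal_mul, Real.mul_self_sqrt (hA.eigenvalues_nonneg i)]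
  rw [conjTranspose_mul, mul_assoc, ← mul_assoc (diagonal _), h2]
  simp only [mul_assoc, h1, mul_one]
  rw [← mul_assoc, h1, one_mul]

/-- Dephasing in the standard basis does not decrease the entropy. -/
theorem IsState.vnEnt_le_sum_diag {A : Matrix n n ℂ} (hA : IsState A) :
    vnEnt A ≤ ∑ i, Real.negMulLog (A i i).re := by
  obtain ⟨U, hU⟩ := exists_unitary_conj_eq_diagonal hA.1.1
  have h1 : (U : Matrix n n ℂ) * (U : Matrix n n ℂ)ᴴ = 1 := Unitary.coe_mul_star_self U
  have h2 : (U : Matrix n n ℂ)ᴴ * (U : Matrix n n ℂ) = 1 := Unitary.coe_star_mul_self U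
  set V : Matrix n n ℂ := (U : Matrix n n ℂ)
  have hAV : A = V * diagonal (fun i => (hA.1.1.eigenvalues i : ℂ)) * Vᴴ := by
    rw [← hU]
    simp only [mul_assoc, h1, mul_one]
    rw [← mul_assoc, h1, one_mul]
  have hrow : ∀ i, ∑ j, Complex.normSq (V i j) = 1 := by
    intro i
    have := congrFun (congrFun h1 i) i
    simp only [mul_apply, conjTranspose_apply, one_apply_eq, RCLike.star_def,
      Complex.mul_conj] at this
    exact_mod_cast this
  have hcol : ∀ j, ∑ i, Complex.normSq (V i j) = 1 := by
    intro j
    have := congrFun (congrFun h2 j) j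
    simp only [mul_apply, conjTranspose_apply, one_apply_eq, RCLike.star_def, mul_comm,
      Complex.mul_conj] at this
    exact_mod_cast this
  have hdiag : ∀ i, (A i i).re = ∑ j, Complex.normSq (V i j) * hA.1.1.eigenvalues j := by
    intro i
    have : A i i = ((∑ j, Complex.normSq (V i j) * hA.1.1.eigenvalues j : ℝ) : ℂ) := by
      conv_lhs => rw [hAV]
      rw [mul_apply]
      push_cast
      refine Finset.sum_congr rfl fun j _ => ?_
      rw [mul_diagonal, conjTranspose_apply, mul_right_comm, ← Complex.mul_conj]
      rfl
    rw [this, Complex.ofReal_re]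
  rw [hA.vnEnt_eq]
  calc ∑ j, Real.negMulLog (hA.1.1.eigenvalues j)
      = ∑ i, ∑ j, Complex.normSq (V i j) * Real.negMulLog (hA.1.1.eigenvalues j) := by
        rw [Finset.sum_comm]
        simp only [← Finset.sum_mul, hcol, one_mul]
    _ ≤ _ := by
        refine Finset.sum_le_sum fun i _ => ?_
        rw [hdiag]
        exact Real.concaveOn_negMulLog.le_map_sum (fun j _ => Complex.normSq_nonneg _) (hrow i)
          (fun j _ => hA.1.eigenvalues_nonneg j)

end Spectral

theorem negMulLog_le_of_marginals {d p q : ℝ} (hd : 0 ≤ d) (hp : d ≤ p) (hq : d ≤ q) :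
    Real.negMulLog d ≤ -(d * Real.log p) - d * Real.log q + (p * q - d) := by
  rcases hd.eq_or_lt with rfl | hd
  · simpa using mul_nonneg hp hq
  have hp0 := hd.trans_le hp
  have hq0 := hd.trans_le hq
  have h := Real.log_le_sub_one_of_pos (div_pos (mul_pos hp0 hq0) hd)
  rw [Real.log_div (mul_pos hp0 hq0).ne' hd.ne', Real.log_mul hp0.ne' hq0.ne'] at h
  have h2 := mul_le_mul_of_nonneg_left h hd.le
  have h3 : d * (p * q / d - 1) = p * q - d := by field_simp
  rw [h3] at h2
  rw [Real.negMulLog]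
  linarith

/-- Subadditivity of the Shannon entropy. -/
theorem sum_negMulLog_le_of_marginals {m n : Type*} [Fintype m] [Fintype n] (d : m × n → ℝ)
    (hd : ∀ x, 0 ≤ d x) (hsum : ∑ x, d x = 1) :
    ∑ x, Real.negMulLog (d x) ≤
      ∑ i, Real.negMulLog (∑ j, d (i, j)) + ∑ j, Real.negMulLog (∑ i, d (i, j)) := by
  have hp : ∑ i, ∑ j, d (i, j) = 1 := by rw [← Fintype.sum_prod_type, hsum]
  have hq : ∑ j, ∑ i, d (i, j) = 1 := by rw [← Fintype.sum_prod_type_right, hsum]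
  set p : m → ℝ := fun i => ∑ j, d (i, j) with hpdef
  set q : n → ℝ := fun j => ∑ i, d (i, j) with hqdef
  calc ∑ x, Real.negMulLog (d x)
      ≤ ∑ x : m × n, (-(d x * Real.log (p x.1)) - d x * Real.log (q x.2)
          + (p x.1 * q x.2 - d x)) :=
        Finset.sum_le_sum fun x _ => negMulLog_le_of_marginals (hd x)
          (Finset.single_le_sum (f := fun j => d (x.1, j)) (fun j _ => hd _) (Finset.mem_univ x.2))
          (Finset.single_le_sum (f := fun i => d (i, x.2)) (fun i _ => hd _) (Finset.mem_univ x.1))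
    _ = _ := by
        have e1 : ∑ x : m × n, d x * Real.log (p x.1) = ∑ i, p i * Real.log (p i) := by
          rw [Fintype.sum_prod_type]
          simp only [hpdef, Finset.sum_mul]
        have e2 : ∑ x : m × n, d x * Real.log (q x.2) = ∑ j, q j * Real.log (q j) := by
          rw [Fintype.sum_prod_type_right]
          simp only [hqdef, Finset.sum_mul]
        have e3 : ∑ x : m × n, p x.1 * q x.2 = 1 := by
          rw [Fintype.sum_prod_type]
          simp only [← Finset.mul_sum]
          rw [hq]
          simpa using hp
        simp only [Finset.sum_add_distrib, Finset.sum_sub_distrib, Finset.sum_neg_distrib, e1, e2,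
          e3, hsum, Real.negMulLog, neg_mul]
        ring

section PartialTrace

variable {m n : Type*}

/-- The partial trace over the right tensor factor. -/
def ptraceRight [Fintype n] (ρ : Matrix (m × n) (m × n) ℂ) : Matrix m m ℂ :=
  of fun i i' => ∑ j, ρ (i, j) (i', j)

/-- The partial trace over the left tensor factor. -/
def ptraceLeft [Fintype m] (ρ : Matrix (m × n) (m × n) ℂ) : Matrix n n ℂ :=
  of fun j j' => ∑ i, ρ (i, j) (i, j')

theorem isHermitian_ptraceRight [Fintype n] {ρ : Matrix (m × n) (m × n) ℂ} (hρ : ρ.IsHermitian) :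
    (ptraceRight ρ).IsHermitian := by
  ext i i'
  simp [ptraceRight, hρ.apply]

theorem isHermitian_ptraceLeft [Fintype m] {ρ : Matrix (m × n) (m × n) ℂ} (hρ : ρ.IsHermitian) :
    (ptraceLeft ρ).IsHermitian := by
  ext i i'
  simp [ptraceLeft, hρ.apply]

variable [Fintype m] [Fintype n]

theorem IsState.submatrix_equiv {A : Matrix n n ℂ} (hA : IsState A) (e : m ≃ n) :
    IsState (A.submatrix e e) :=
  ⟨hA.1.submatrix e, (e.sum_comp fun i => A i i).trans hA.2⟩

theorem trace_ptraceRight (ρ : Matrix (m × n) (m × n) ℂ) : (ptraceRight ρ).trace = ρ.trace := by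
  simp [trace, ptraceRight, Fintype.sum_prod_type]

theorem trace_mul_kronecker_one [DecidableEq n] (ρ : Matrix (m × n) (m × n) ℂ) (P : Matrix m m ℂ) :
    (ρ * (P ⊗ₖ (1 : Matrix n n ℂ))).trace = (ptraceRight ρ * P).trace := by
  simp only [trace, diag_apply, mul_apply, ptraceRight, of_apply, Fintype.sum_prod_type,
    kroneckerMap_apply, one_apply, mul_ite, mul_one, mul_zero, Finset.sum_ite_eq',
    Finset.mem_univ, if_true, Finset.sum_mul]
  exact Finset.sum_congr rfl fun i _ => Finset.sum_comm

theorem trace_mul_one_kronecker [DecidableEq m] (ρ : Matrix (m × n) (m × n) ℂ) (P : Matrix n n ℂ) :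
    (ρ * ((1 : Matrix m m ℂ) ⊗ₖ P)).trace = (ptraceLeft ρ * P).trace := by
  simp only [trace, diag_apply, mul_apply, ptraceLeft, of_apply, Fintype.sum_prod_type_right,
    kroneckerMap_apply, one_apply, ite_mul, one_mul, zero_mul, mul_ite, mul_zero,
    Finset.sum_ite_eq', Finset.mem_univ, if_true, Finset.sum_mul]
  exact Finset.sum_congr rfl fun i _ => Finset.sum_comm

theorem ptraceRight_conj_kronecker [DecidableEq n] (ρ : Matrix (m × n) (m × n) ℂ) (U : Matrix m m ℂ)
    {V : Matrix n n ℂ} (hV : V * Vᴴ = 1) :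
    ptraceRight ((U ⊗ₖ V)ᴴ * ρ * (U ⊗ₖ V)) = Uᴴ * ptraceRight ρ * U := by
  refine ext_iff_trace_mul_right.2 fun P => ?_
  rw [← trace_mul_kronecker_one, mul_assoc _ _ (P ⊗ₖ 1), mul_assoc, trace_mul_comm, mul_assoc,
    mul_assoc, conjTranspose_kronecker, ← mul_kronecker_mul, ← mul_kronecker_mul, one_mul, hV,
    trace_mul_kronecker_one, mul_assoc Uᴴ, mul_assoc Uᴴ, trace_mul_comm Uᴴ]
  simp only [mul_assoc]

theorem ptraceLeft_conj_kronecker [DecidableEq m] (ρ : Matrix (m × n) (m × n) ℂ) {U : Matrix m m ℂ}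
    (V : Matrix n n ℂ) (hU : U * Uᴴ = 1) :
    ptraceLeft ((U ⊗ₖ V)ᴴ * ρ * (U ⊗ₖ V)) = Vᴴ * ptraceLeft ρ * V := by
  refine ext_iff_trace_mul_right.2 fun P => ?_
  rw [← trace_mul_one_kronecker, mul_assoc _ _ (1 ⊗ₖ P), mul_assoc, trace_mul_comm, mul_assoc,
    mul_assoc, conjTranspose_kronecker, ← mul_kronecker_mul, ← mul_kronecker_mul, one_mul, hU,
    trace_mul_one_kronecker, mul_assoc Vᴴ, mul_assoc Vᴴ, trace_mul_comm Vᴴ]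
  simp only [mul_assoc]

variable [DecidableEq m] [DecidableEq n]

/-- Subadditivity of the von Neumann entropy. -/
theorem IsState.vnEnt_le_add {ρ : Matrix (m × n) (m × n) ℂ} (hρ : IsState ρ) :
    vnEnt ρ ≤ vnEnt (ptraceRight ρ) + vnEnt (ptraceLeft ρ) := by
  have hA := isHermitian_ptraceRight hρ.1.1
  have hB := isHermitian_ptraceLeft hρ.1.1
  obtain ⟨U, hU⟩ := exists_unitary_conj_eq_diagonal hA
  obtain ⟨V, hV⟩ := exists_unitary_conj_eq_diagonal hB
  have hU1 : (U : Matrix m m ℂ) * (U : Matrix m m ℂ)ᴴ = 1 := Unitary.coe_mul_star_self U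
  have hV1 : (V : Matrix n n ℂ) * (V : Matrix n n ℂ)ᴴ = 1 := Unitary.coe_mul_star_self V
  let W : unitaryGroup (m × n) ℂ :=
    ⟨(U : Matrix m m ℂ) ⊗ₖ (V : Matrix n n ℂ), kronecker_mem_unitary U.2 V.2⟩
  have hW1 : (W : Matrix (m × n) (m × n) ℂ) * (W : Matrix (m × n) (m × n) ℂ)ᴴ = 1 :=
    Unitary.coe_mul_star_self W
  set σ : Matrix (m × n) (m × n) ℂ :=
    (W : Matrix (m × n) (m × n) ℂ)ᴴ * ρ * (W : Matrix (m × n) (m × n) ℂ) with hσdef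
  have hσ : IsState σ := by
    refine ⟨hρ.1.conjTranspose_mul_mul_same _, ?_⟩
    rw [hσdef, mul_assoc, trace_mul_comm, mul_assoc, hW1, mul_one, hρ.2]
  have hR : ptraceRight σ = diagonal (fun i => (hA.eigenvalues i : ℂ)) :=
    (ptraceRight_conj_kronecker ρ _ hV1).trans hU
  have hL : ptraceLeft σ = diagonal (fun i => (hB.eigenvalues i : ℂ)) :=
    (ptraceLeft_conj_kronecker ρ _ hU1).trans hV
  have hp : ∀ i, ∑ j, (σ (i, j) (i, j)).re = hA.eigenvalues i := fun i => by
    have := congrArg Complex.re (congrFun (congrFun hR i) i)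
    simpa [ptraceRight] using this
  have hq : ∀ j, ∑ i, (σ (i, j) (i, j)).re = hB.eigenvalues j := fun j => by
    have := congrArg Complex.re (congrFun (congrFun hL j) j)
    simpa [ptraceLeft] using this
  have hsum : ∑ x, (σ x x).re = 1 := by
    simpa [trace] using congrArg Complex.re hσ.2
  have hAsum : ∑ i, hA.eigenvalues i = 1 := by
    simp only [← hp, ← hsum, Fintype.sum_prod_type]
  have hBsum : ∑ i, hB.eigenvalues i = 1 := by
    simp only [← hq, ← hsum, Fintype.sum_prod_type_right]
  calc vnEnt ρ = vnEnt σ := (vnEnt_conj_unitary hρ.1.1 W).symm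
    _ ≤ ∑ x, Real.negMulLog (σ x x).re := hσ.vnEnt_le_sum_diag
    _ ≤ _ := sum_negMulLog_le_of_marginals (fun x => (σ x x).re)
      (fun x => (Complex.nonneg_iff.1 hσ.1.diag_nonneg).1) hsum
    _ = vnEnt (ptraceRight ρ) + vnEnt (ptraceLeft ρ) := by
      simp only [hp, hq]
      rw [vnEnt, vnEnt, dif_pos hA, dif_pos hB, hAsum, hBsum, Real.negMulLog_one, sub_zero,
        sub_zero]

/-- The Araki–Lieb inequality. -/
theorem IsState.vnEnt_ptraceLeft_le {ρ : Matrix (m × n) (m × n) ℂ} (hρ : IsState ρ) :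
    vnEnt (ptraceLeft ρ) ≤ vnEnt (ptraceRight ρ) + vnEnt ρ := by
  obtain ⟨M, hM⟩ := exists_mul_conjTranspose_eq hρ.1
  let K : Matrix (m × (m × n)) n ℂ := of fun x j => M (x.1, j) x.2
  have hR : ptraceRight (K * Kᴴ) = ptraceRight ρ := by
    ext i i'
    simp only [ptraceRight, of_apply, ← hM, mul_apply, conjTranspose_apply, K]
    exact Finset.sum_comm
  have hL : ptraceLeft (K * Kᴴ) = (Mᴴ * M)ᵀ := by
    ext i i'
    simp only [ptraceLeft, of_apply, transpose_apply, mul_apply, conjTranspose_apply, K,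
      Fintype.sum_prod_type, mul_comm]
  have hB : Kᴴ * K = (ptraceLeft ρ)ᵀ := by
    ext j j'
    simp only [ptraceLeft, of_apply, ← hM, mul_apply, transpose_apply, conjTranspose_apply, K,
      Fintype.sum_prod_type, mul_comm]
  have hK : IsState (K * Kᴴ) :=
    ⟨posSemidef_self_mul_conjTranspose K, by rw [← trace_ptraceRight, hR, trace_ptraceRight, hρ.2]⟩
  have h := hK.vnEnt_le_add
  rwa [hR, hL, vnEnt_transpose (isHermitian_conjTranspose_mul_self M),
    ← vnEnt_mul_conjTranspose M, hM, vnEnt_mul_conjTranspose, hB,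
    vnEnt_transpose (isHermitian_ptraceLeft hρ.1.1)] at h

theorem IsState.abs_vnEnt_sub_le {ρ : Matrix (m × n) (m × n) ℂ} (hρ : IsState ρ) :
    |vnEnt ρ - vnEnt (ptraceLeft ρ)| ≤ vnEnt (ptraceRight ρ) :=
  abs_sub_le_iff.2 ⟨by linarith [hρ.vnEnt_le_add], by linarith [hρ.vnEnt_ptraceLeft_le]⟩

end PartialTrace

section Marginals

variable {N : ℕ} {α : Fin N → Type*} [∀ i, Fintype (α i)]
  {S T : Finset (Fin N)} {ω : Matrix (∀ i, α i) (∀ i, α i) ℂ}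

/-- A configuration on `S ∪ T` is a pair of configurations on `S` and on `T`. -/
def unionConfigEquiv (h : Disjoint S T) :
    (∀ i : {x : Fin N // x ∈ S ∪ T}, α i.1) ≃
      (∀ i : {x : Fin N // x ∈ S}, α i.1) × (∀ i : {x : Fin N // x ∈ T}, α i.1) where
  toFun p := (fun i => p ⟨i, Finset.mem_union_left _ i.2⟩,
    fun i => p ⟨i, Finset.mem_union_right _ i.2⟩)
  invFun x i := if hi : i.1 ∈ S then x.1 ⟨i, hi⟩ else
    x.2 ⟨i, (Finset.mem_union.1 i.2).resolve_left hi⟩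
  left_inv p := by
    funext i
    by_cases hi : i.1 ∈ S <;> simp [hi]
  right_inv x := by
    refine Prod.ext (funext fun i => ?_) (funext fun i => ?_)
    · simp
    · simp [Finset.disjoint_right.1 h i.2]

/-- A configuration off `S` is a configuration on `T` together with one off `R = S ∪ T`. -/
def complConfigEquiv {R : Finset (Fin N)} (h : Disjoint S T)
    (hR : ∀ x, x ∈ R ↔ x ∈ S ∨ x ∈ T) :
    (∀ i : {x : Fin N // x ∉ S}, α i.1) ≃
      (∀ i : {x : Fin N // x ∈ T}, α i.1) × (∀ i : {x : Fin N // x ∉ R}, α i.1) where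
  toFun g := (fun i => g ⟨i, Finset.disjoint_right.1 h i.2⟩,
    fun i => g ⟨i, fun hi => i.2 ((hR _).2 (Or.inl hi))⟩)
  invFun x i := if hi : i.1 ∈ T then x.1 ⟨i, hi⟩ else
    x.2 ⟨i, fun hU => ((hR _).1 hU).elim i.2 hi⟩
  left_inv g := by
    funext i
    by_cases hi : i.1 ∈ T <;> simp [hi]
  right_inv x := by
    refine Prod.ext (funext fun i => ?_) (funext fun i => ?_)
    · simp
    · have hi : i.1 ∉ T := fun hT => i.2 ((hR _).2 (Or.inr hT))
      simp [hi]

theorem IsState.marg (hω : IsState ω) (S : Finset (Fin N)) : IsState (marg S ω) := by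
  constructor
  · have : _root_.marg S ω = ∑ g : ∀ i : {x : Fin N // x ∉ S}, α i.1,
        ω.submatrix (fun p i => if h : i ∈ S then p ⟨i, h⟩ else g ⟨i, h⟩)
          (fun p i => if h : i ∈ S then p ⟨i, h⟩ else g ⟨i, h⟩) := by
      ext p q
      simp [_root_.marg, Matrix.sum_apply]
    rw [this]
    exact posSemidef_sum _ fun g _ => hω.1.submatrix _
  · rw [← hω.2, trace, trace,
      ← (Equiv.piEquivPiSubtypeProd (fun x => x ∈ S) α).symm.sum_comp, Fintype.sum_prod_type]
    rfl

theorem ptraceRight_marg_union (h : Disjoint S T) :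
    ptraceRight ((marg (S ∪ T) ω).submatrix (unionConfigEquiv h).symm (unionConfigEquiv h).symm) =
      marg S ω := by
  ext p q
  simp only [ptraceRight, marg, of_apply, submatrix_apply]
  rw [← Fintype.sum_prod_type', ← (complConfigEquiv h fun _ => Finset.mem_union).sum_comp]
  refine Finset.sum_congr rfl fun g _ => ?_
  congr 1 <;> funext i <;> by_cases hS : i ∈ S <;> by_cases hT : i ∈ T <;>
    simp [unionConfigEquiv, complConfigEquiv, hS, hT]

theorem ptraceLeft_marg_union (h : Disjoint S T) :
    ptraceLeft ((marg (S ∪ T) ω).submatrix (unionConfigEquiv h).symm (unionConfigEquiv h).symm) =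
      marg T ω := by
  ext p q
  simp only [ptraceLeft, marg, of_apply, submatrix_apply]
  rw [← Fintype.sum_prod_type',
    ← (complConfigEquiv h.symm fun _ => Finset.mem_union.trans or_comm).sum_comp]
  refine Finset.sum_congr rfl fun g _ => ?_
  congr 1 <;> funext i <;> by_cases hS : i ∈ S <;> by_cases hT : i ∈ T <;>
    first
    | exact absurd hT (Finset.disjoint_left.1 h hS)
    | simp [unionConfigEquiv, complConfigEquiv, hS, hT]

theorem abs_vnEnt_marg_union_sub_le [∀ i, DecidableEq (α i)] (hω : IsState ω)
    (h : Disjoint S T) :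
    |vnEnt (marg (S ∪ T) ω) - vnEnt (marg T ω)| ≤ vnEnt (marg S ω) := by
  have := ((hω.marg (S ∪ T)).submatrix_equiv (unionConfigEquiv h).symm).abs_vnEnt_sub_le
  rwa [ptraceRight_marg_union, ptraceLeft_marg_union,
    vnEnt_submatrix_equiv (hω.marg (S ∪ T)).1.1] at this

theorem vnEnt_marg_empty [∀ i, DecidableEq (α i)] (ω : Matrix (∀ i, α i) (∀ i, α i) ℂ) :
    vnEnt (marg ∅ ω) = 0 := by
  have : IsEmpty {x : Fin N // x ∈ (∅ : Finset (Fin N))} := ⟨fun x => Finset.notMem_empty _ x.2⟩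
  exact vnEnt_of_unique _

/-- The interaction information is an alternating sum of conditional entropies of one subsystem. -/
theorem interInfo_eq_sum_erase [∀ i, DecidableEq (α i)] (ω : Matrix (∀ i, α i) (∀ i, α i) ℂ)
    (i : Fin N) :
    interInfo ω = ∑ Y ∈ (Finset.univ.erase i).powerset,
      (-1 : ℝ) ^ Y.card * (vnEnt (marg ({i} ∪ Y) ω) - vnEnt (marg Y ω)) := by
  have h1 : ∑ S ∈ Finset.univ.powerset.filter (fun S : Finset (Fin N) => S.Nonempty),
      (-1 : ℝ) ^ S.card * vnEnt (marg S ω) =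
      ∑ S ∈ (Finset.univ : Finset (Fin N)).powerset, (-1 : ℝ) ^ S.card * vnEnt (marg S ω) := by
    refine Finset.sum_subset (Finset.filter_subset _ _) fun S hS hS' => ?_
    have : S = ∅ := by simpa [Finset.not_nonempty_iff_eq_empty] using hS'
    subst this
    rw [vnEnt_marg_empty, mul_zero]
  rw [interInfo, h1, ← Finset.insert_erase (Finset.mem_univ i),
    Finset.sum_powerset_insert (Finset.notMem_erase _ _), ← Finset.sum_add_distrib,
    ← Finset.sum_neg_distrib, Finset.insert_erase (Finset.mem_univ i)]
  refine Finset.sum_congr rfl fun Y hY => ?_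
  have hi : i ∉ Y := fun h => Finset.notMem_erase i _ (Finset.mem_powerset.1 hY h)
  rw [Finset.card_insert_of_notMem hi, Finset.insert_eq, pow_succ]
  ring

end Marginals

/-- The interaction information satisfies
`|I_N(ω)| ≤ 2^{N−1} · min_i H(ω_{A_i})`. -/
theorem interInfo_abs_le {N : ℕ} {α : Fin N → Type*}
    [∀ i, Fintype (α i)] [∀ i, DecidableEq (α i)] (hN : 0 < N)
    (ω : Matrix (∀ i, α i) (∀ i, α i) ℂ) (hω : IsState ω) :
    |interInfo ω| ≤ 2 ^ (N - 1) * ⨅ i : Fin N, vnEnt (marg {i} ω) := by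
  have : Nonempty (Fin N) := ⟨⟨0, hN⟩⟩
  obtain ⟨i, hi⟩ := exists_eq_ciInf_of_finite (f := fun i : Fin N => vnEnt (marg {i} ω))
  rw [← hi, interInfo_eq_sum_erase ω i]
  calc _ ≤ ∑ Y ∈ (Finset.univ.erase i).powerset,
        |(-1 : ℝ) ^ Y.card * (vnEnt (marg ({i} ∪ Y) ω) - vnEnt (marg Y ω))| :=
        Finset.abs_sum_le_sum_abs _ _
    _ ≤ ∑ _Y ∈ (Finset.univ.erase i).powerset, vnEnt (marg {i} ω) := by
        refine Finset.sum_le_sum fun Y hY => ?_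
        have hiY : i ∉ Y := fun h => Finset.notMem_erase i _ (Finset.mem_powerset.1 hY h)
        rw [abs_mul, abs_neg_one_pow, one_mul]
        exact abs_vnEnt_marg_union_sub_le hω (Finset.disjoint_singleton_left.2 hiY)
    _ = _ := by simp [Finset.card_erase_of_mem]
end
end
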